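/- Suppose p ≥ 4. Then every DAV form has pairwise distinct rows if and only if (α,β) ≠ (1,1) and β ≥ 2α − 2. That is, the following are equivalent: (i) (α,β) ≠ (1,1) and β ≥ 2α − 2; (ii) every function g : X × Y → A with g(x,y) ∈ AM(x+y) for all (x,y) ∈ X × Y satisfies: for all distinct x, x' ∈ X there exists y ∈ Y with g(x,y) ≠ g(x',y). -/

import Mathlib

/-- The set of candidates receiving the maximum number of cards under `z`. -/
def AM {A : Type*} [Fintype A] (z : A → ℕ) : Set A := {a | ∀ b, z b ≤ z a}

open Classical in
theorem dav_three_le {A : Type*} [Fintype A] (x : A → ℕ) {b c d : A}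
    (hbc : b ≠ c) (hbd : b ≠ d) (hcd : c ≠ d) : x b + x c + x d ≤ ∑ a, x a := by
  have h : ∑ a ∈ ({b, c, d} : Finset A), x a ≤ ∑ a, x a :=
    Finset.sum_le_sum_of_subset (Finset.subset_univ _)
  rw [Finset.sum_insert (by simp [hbc, hbd]), Finset.sum_insert (by simp [hcd]),
    Finset.sum_singleton] at h
  omega

open Classical in
theorem dav_core {A : Type*} [Fintype A] (x x' : A → ℕ) {b c d : A}
    (hbc : b ≠ c) (hbd : b ≠ d) (hcd : c ≠ d) (k l m : ℕ)
    (h1 : x c + l < x b + k) (h2 : x' b + k < x' c + l)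
    (h3 : x d + m < x b + k ∨ x' d + m < x' c + l)
    (h4 : ∀ e, e ≠ b → e ≠ c → e ≠ d → (x e < x b + k ∨ x' e < x' c + l)) :
    ∃ y : A → ℕ, ∑ a, y a = k + l + m ∧ ∀ a, a ∈ AM (x + y) → a ∈ AM (x' + y) → False := by
  refine ⟨Pi.single b k + Pi.single c l + Pi.single d m, ?_, ?_⟩
  · simp [Finset.sum_add_distrib]
  · intro a ha ha'
    have hb := ha b
    have hc := ha' c
    simp only [Pi.add_apply, Pi.single_apply, hbc, hbd, hcd, hbc.symm, if_true, if_false] at hb hc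
    by_cases e1 : a = b
    · subst e1; simp [hbc, hbd] at hb hc; omega
    by_cases e2 : a = c
    · subst e2; simp [hbc.symm, hcd] at hb hc; omega
    by_cases e3 : a = d
    · subst e3; simp [hbd.symm, hcd.symm] at hb hc; omega
    have := h4 a e1 e2 e3
    simp [e1, e2, e3] at hb hc; omega

theorem dav_side {A : Type*} [Fintype A] (x x' : A → ℕ) (α β : ℕ) {b c d : A}
    (hx : ∑ a, x a = α) (hx' : ∑ a, x' a = α) (hβ : 2 * α - 2 ≤ β)
    (hbc : b ≠ c) (hbd : b ≠ d) (hcd : c ≠ d)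
    (h1 : x' b < x b) (h2 : x c < x' c) (h3 : x b ≤ x c) :
    ∃ y : A → ℕ, ∑ a, y a = β ∧ ∀ a, a ∈ AM (x + y) → a ∈ AM (x' + y) → False := by
  have t1 := dav_three_le x hbc hbd hcd
  obtain ⟨δ, hδ⟩ : ∃ δ, δ = x c - x b + 1 := ⟨_, rfl⟩
  obtain ⟨k, hk⟩ : ∃ k, k = (β - δ) / 2 := ⟨_, rfl⟩
  obtain ⟨m, hm⟩ : ∃ m, m = (β - δ) % 2 := ⟨_, rfl⟩
  obtain ⟨y, hy, hh⟩ := dav_core x x' hbc hbd hcd (k + δ) k m (by omega) (by omega)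
    (by omega) (by
      intro e hb hc _
      have t2 := dav_three_le x hbc hb.symm hc.symm
      omega)
  exact ⟨y, by omega, hh⟩

theorem dav_mid {A : Type*} [Fintype A] (x x' : A → ℕ) (α β : ℕ) {b c d f : A}
    (hx : ∑ a, x a = α) (hβ1 : 1 ≤ β)
    (hne : ¬(α = 1 ∧ β = 1)) (hβ : 2 * α - 2 ≤ β)
    (hbc : b ≠ c) (hbd : b ≠ d) (hcd : c ≠ d) (hbf : b ≠ f) (hdf : d ≠ f)
    (h1 : x c < x b) (h2 : x' b < x' c) (h3 : x d ≤ x f) :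
    ∃ y : A → ℕ, ∑ a, y a = β ∧ ∀ a, a ∈ AM (x + y) → a ∈ AM (x' + y) → False := by
  have t1 := dav_three_le x hbd hbf hdf
  obtain ⟨k, hk⟩ : ∃ k, k = β / 2 := ⟨_, rfl⟩
  obtain ⟨m, hm⟩ : ∃ m, m = β % 2 := ⟨_, rfl⟩
  obtain ⟨y, hy, hh⟩ := dav_core x x' hbc hbd hcd k k m (by omega) (by omega)
    (by omega) (by
      intro e hb hc _
      have t2 := dav_three_le x hbc hb.symm hc.symm
      omega)
  exact ⟨y, by omega, hh⟩

theorem dav_exists_lt {A : Type*} [Fintype A] (x x' : A → ℕ)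
    (h : ∑ a, x a = ∑ a, x' a) (hne : x ≠ x') : ∃ b, x' b < x b := by
  by_contra hcon
  push Not at hcon
  apply hne
  funext a
  exact (Finset.sum_eq_sum_iff_of_le (fun i _ => hcon i)).1 h a (Finset.mem_univ a)

open Classical in
theorem dav_forward {A : Type*} [Fintype A] (x x' : A → ℕ) (α β : ℕ)
    (hp : 4 ≤ Fintype.card A) (hβ1 : 1 ≤ β)
    (hx : ∑ a, x a = α) (hx' : ∑ a, x' a = α)
    (hne : ¬(α = 1 ∧ β = 1)) (hβ : 2 * α - 2 ≤ β) (hxx : x ≠ x') :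
    ∃ y : A → ℕ, ∑ a, y a = β ∧ ∀ a, a ∈ AM (x + y) → a ∈ AM (x' + y) → False := by
  obtain ⟨b, hb⟩ := dav_exists_lt x x' (hx.trans hx'.symm) hxx
  obtain ⟨c, hc⟩ := dav_exists_lt x' x (hx'.trans hx.symm) hxx.symm
  have hbc : b ≠ c := by rintro rfl; omega
  have hcard : 1 < (({b, c} : Finset A)ᶜ).card := by
    rw [Finset.card_compl, Finset.card_pair hbc]; omega
  obtain ⟨d, hd, f, hf, hdf⟩ := Finset.one_lt_card.1 hcard
  simp only [Finset.mem_compl, Finset.mem_insert, Finset.mem_singleton, not_or] at hd hf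
  by_cases c1 : x b ≤ x c
  · exact dav_side x x' α β hx hx' hβ hbc (Ne.symm hd.1) (Ne.symm hd.2) hb hc c1
  by_cases c2 : x' c ≤ x' b
  · obtain ⟨y, hy, h⟩ := dav_side x' x α β hx' hx hβ hbc.symm (Ne.symm hd.2) (Ne.symm hd.1) hc hb c2
    exact ⟨y, hy, fun a h1 h2 => h a h2 h1⟩
  rcases le_total (x d) (x f) with h | h
  · exact dav_mid x x' α β hx hβ1 hne hβ hbc (Ne.symm hd.1) (Ne.symm hd.2)
      (Ne.symm hf.1) hdf (by omega) (by omega) h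
  · exact dav_mid x x' α β hx hβ1 hne hβ hbc (Ne.symm hf.1) (Ne.symm hf.2)
      (Ne.symm hd.1) hdf.symm (by omega) (by omega) h

open Classical in
theorem dav_build {A : Type*} [Fintype A] [Nonempty A] (x x' : A → ℕ) (β : ℕ)
    (h : ∀ y : A → ℕ, ∑ a, y a = β → ∃ a, a ∈ AM (x + y) ∧ a ∈ AM (x' + y)) :
    ∃ g : (A → ℕ) → (A → ℕ) → A,
      (∀ u v : A → ℕ, ∑ a, v a = β → g u v ∈ AM (u + v)) ∧
      ∀ y : A → ℕ, ∑ a, y a = β → g x y = g x' y := by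
  have h' : ∀ y : A → ℕ, ∃ a, ∑ a, y a = β → a ∈ AM (x + y) ∧ a ∈ AM (x' + y) := by
    intro y
    by_cases hy : ∑ a, y a = β
    · obtain ⟨a, ha⟩ := h y hy
      exact ⟨a, fun _ => ha⟩
    · exact ⟨Classical.arbitrary A, fun hh => absurd hh hy⟩
  choose f hf using h'
  have hmax : ∀ z : A → ℕ, ∃ a, a ∈ AM z := fun z => Finite.exists_max z
  choose m hm using hmax
  refine ⟨fun u v => if u = x ∨ u = x' then f v else m (u + v), ?_, ?_⟩
  · intro u v hv
    dsimp only
    split_ifs with hu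
    · rcases hu with rfl | rfl
      · exact (hf v hv).1
      · exact (hf v hv).2
    · exact hm _
  · intro y _
    simp

theorem dav_two_le {A : Type*} [Fintype A] (x : A → ℕ) {b c : A}
    (hbc : b ≠ c) : x b + x c ≤ ∑ a, x a := by
  classical
  have h : ∑ a ∈ ({b, c} : Finset A), x a ≤ ∑ a, x a :=
    Finset.sum_le_sum_of_subset (Finset.subset_univ _)
  rwa [Finset.sum_pair hbc] at h

open Classical in
/-- The pair of rows `(n) a + b` and `(n) a + c` is not separated when the column voter is weak. -/
theorem dav_common {A : Type*} [Fintype A] [Nonempty A] (n : ℕ) {a b c : A}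
    (hab : a ≠ b) (hac : a ≠ c) (hbc : b ≠ c) (y : A → ℕ)
    (hy : (∑ i, y i) < 2 * n ∨ (n = 0 ∧ ∑ i, y i = 1)) :
    ∃ i, i ∈ AM ((Pi.single a n + Pi.single b 1 : A → ℕ) + y) ∧
      i ∈ AM ((Pi.single a n + Pi.single c 1 : A → ℕ) + y) := by
  -- values away from `b` and `c`
  obtain ⟨w, hw⟩ : ∃ w : A → ℕ, w = Pi.single a n + y := ⟨_, rfl⟩
  have hwb : w b = y b := by simp [hw, hab.symm]
  have hwc : w c = y c := by simp [hw, hac.symm]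
  have hwa : w a = n + y a := by simp [hw]
  have e1 : (Pi.single a n + Pi.single b 1 : A → ℕ) + y = w + Pi.single b 1 := by
    rw [hw]; abel
  have e2 : (Pi.single a n + Pi.single c 1 : A → ℕ) + y = w + Pi.single c 1 := by
    rw [hw]; abel
  rw [e1, e2]
  obtain ⟨i, hi⟩ := Finite.exists_max w
  have t1 := dav_two_le y hbc
  by_cases hB : w b = w i
  · by_cases hC : w c = w i
    · -- both tops: impossible, unless n = 0
      exfalso
      have := hi a
      rcases hy with h | ⟨hn, h⟩
      · omega
      · have h0 : ∑ j, y j = 0 := by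
          refine Finset.sum_eq_zero fun j _ => ?_
          have h1 := hi j
          have h2 : y j ≤ w j := by simp [hw]
          omega
        omega
    · refine ⟨b, fun j => ?_, fun j => ?_⟩
      · have := hi j
        simp only [Pi.add_apply, Pi.single_apply]
        split_ifs <;> omega
      · have := hi j
        have := hi c
        simp only [Pi.add_apply, Pi.single_apply, hbc, if_false]
        split_ifs with hj
        · subst hj; omega
        · omega
  · by_cases hC : w c = w i
    · refine ⟨c, fun j => ?_, fun j => ?_⟩
      · have := hi j
        have := hi b
        simp only [Pi.add_apply, Pi.single_apply, hbc.symm, if_false]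
        split_ifs with hj
        · subst hj; omega
        · omega
      · have := hi j
        simp only [Pi.add_apply, Pi.single_apply]
        split_ifs <;> omega
    · have hib : i ≠ b := by rintro rfl; exact hB rfl
      have hic : i ≠ c := by rintro rfl; exact hC rfl
      have := hi b
      have := hi c
      refine ⟨i, fun j => ?_, fun j => ?_⟩
      · have := hi j
        simp only [Pi.add_apply, Pi.single_apply, hib, if_false]
        split_ifs with hj
        · subst hj; omega
        · omega
      · have := hi j
        simp only [Pi.add_apply, Pi.single_apply, hic, if_false]
        split_ifs with hj
        · subst hj; omega
        · omega

/-- For `p ≥ 4`: every DAV form has pairwise distinct rows iff `(α,β) ≠ (1,1)`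
and `β ≥ 2α - 2`. -/
theorem dav_form_distinct_rows_iff_many_candidates
    {A : Type*} [Fintype A] (α β : ℕ) (hα : 1 ≤ α) (hβ : 1 ≤ β)
    (hp : 4 ≤ Fintype.card A) :
    (¬(α = 1 ∧ β = 1) ∧ 2 * α - 2 ≤ β) ↔
      ∀ g : (A → ℕ) → (A → ℕ) → A,
        (∀ x y : A → ℕ, (∑ a, x a) = α → (∑ a, y a) = β → g x y ∈ AM (x + y)) →
        ∀ x x' : A → ℕ, (∑ a, x a) = α → (∑ a, x' a) = α → x ≠ x' →
          ∃ y : A → ℕ, (∑ a, y a) = β ∧ g x y ≠ g x' y := by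
  classical
  constructor
  · rintro ⟨hne, h2⟩ g hg x x' hx hx' hxx
    obtain ⟨y, hy, h⟩ := dav_forward x x' α β hp hβ hx hx' hne h2 hxx
    refine ⟨y, hy, fun heq => h (g x y) (hg x y hx hy) ?_⟩
    rw [heq]
    exact hg x' y hx' hy
  · intro H
    by_contra hcon
    have hcase : β < 2 * (α - 1) ∨ (α - 1 = 0 ∧ β = 1) := by omega
    have hA : 2 < (Finset.univ : Finset A).card := by rw [Finset.card_univ]; omega
    obtain ⟨a, -, b, -, c, -, hab, hac, hbc⟩ := Finset.two_lt_card.1 hA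
    have : Nonempty A := ⟨a⟩
    obtain ⟨g, hg, hgg⟩ := dav_build (Pi.single a (α - 1) + Pi.single b 1)
      (Pi.single a (α - 1) + Pi.single c 1) β
      (fun y hy => dav_common (α - 1) hab hac hbc y (by rw [hy]; exact hcase))
    obtain ⟨y, hy, hne⟩ := H g (fun u v _ hv => hg u v hv) (Pi.single a (α - 1) + Pi.single b 1)
      (Pi.single a (α - 1) + Pi.single c 1)
      (by simp [Finset.sum_add_distrib]; omega) (by simp [Finset.sum_add_distrib]; omega)
      (by
        intro h
        have := congrFun h b
        simp [Pi.single_apply, hbc] at this)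
    exact hne (hgg y hy)
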